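/- Eigenfunctions of 𝓛_A − I + V via the twisted cohomological equation (absence of spectral gap): let X = {0,1}^ℕ, θ ∈ (0,1), let A : X → ℝ be a normalized Lipschitz potential and V : X → ℝ a Lipschitz function with sup V − inf V < 2. Then for every c ∈ ℝ with max(sup V − 2, 0) < c < inf V there exists a bounded Borel-measurable function α : X → ℝ, not identically zero, such that Σ_{a ∈ {0,1}} e^{A(ax)}·α(ax) − α(x) + V(x)·α(x) = c·α(x) for every x ∈ X; that is, c is an eigenvalue of 𝓛_A − I + M_V acting on bounded measurable functions. -/

import Mathlib

/-!
Put `w = 1 + c - V`; the equation to solve is `𝓛_A α = w α`. The bounds `sup V - 2 < c < inf V` give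
`|w| ≤ ρ` for some constant `ρ < 1`.

The function `φ(0y) = e^{-A(0y)}`, `φ(1y) = -e^{-A(1y)}` satisfies `𝓛_A φ = 0`, and since `A` is
normalized, `𝓛_A (g ∘ σ) = g` for every `g`. Hence any solution of the twisted cohomological
equation `α = φ + (w α) ∘ σ` satisfies `𝓛_A α = w α`. As `|w| ≤ ρ < 1`, this equation is solved by
the uniformly convergent series `α = ∑ₙ (∏_{k<n} w ∘ σ^{k+1}) · φ ∘ σⁿ`, which is even continuous
(`exists_twisted_solution`). It is not identically zero, because `α = 0` would force `φ = 0`,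
whereas `φ` never vanishes.
-/

open MeasureTheory Filter

noncomputable section

/-- The concatenation `a·x`: `(ax)(0) = a`, `(ax)(n+1) = x n`. -/
def cons {d : ℕ} (a : Fin d) (x : ℕ → Fin d) : ℕ → Fin d
  | 0 => a
  | n + 1 => x n

/-- The shift map `σ` on the Bernoulli space. -/
def shift {d : ℕ} (x : ℕ → Fin d) : ℕ → Fin d := fun n => x (n + 1)

open Classical in
/-- The metric `d_θ` on the Bernoulli space: `d_θ(x,y) = θ^{min{n : x n ≠ y n}}` for `x ≠ y`. -/
def distTheta {d : ℕ} (θ : ℝ) (x y : ℕ → Fin d) : ℝ :=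
  if x = y then 0 else θ ^ sInf {n : ℕ | x n ≠ y n}

/-- The Ruelle operator with potential `B`, applied pointwise:
`(𝓛_B g)(x) = Σ_{a} e^{B(ax)} g(ax)`. -/
def ruelleSum {d : ℕ} (B : (ℕ → Fin d) → ℝ) (g : (ℕ → Fin d) → ℝ) (x : ℕ → Fin d) : ℝ :=
  ∑ a : Fin d, Real.exp (B (cons a x)) * g (cons a x)

/-- The exponential `e^B` of a bounded operator `B` on `C(X,ℝ)`, applied to `f`:
`e^B f = Σ_{n=0}^∞ (1/n!) Bⁿ f`. -/
def opExp {X : Type*} [TopologicalSpace X] [CompactSpace X]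
    (B : C(X, ℝ) →L[ℝ] C(X, ℝ)) (f : C(X, ℝ)) : C(X, ℝ) :=
  ∑' n : ℕ, ((Nat.factorial n : ℝ)⁻¹ • (B ^ n) f)

lemma shift_cons_eq {d : ℕ} (a : Fin d) (x : ℕ → Fin d) : shift (cons a x) = x := rfl

lemma continuous_shift {d : ℕ} : Continuous (shift : (ℕ → Fin d) → ℕ → Fin d) :=
  continuous_pi fun n => continuous_apply (n + 1)

lemma distTheta_nonneg {d : ℕ} {θ : ℝ} (h0 : 0 < θ) (x y : ℕ → Fin d) :
    0 ≤ distTheta θ x y := by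
  unfold distTheta
  split_ifs <;> positivity

lemma distTheta_le_pow {d : ℕ} {θ : ℝ} (h0 : 0 < θ) (h1 : θ < 1) {x y : ℕ → Fin d} {n : ℕ}
    (h : ∀ i < n, x i = y i) : distTheta θ x y ≤ θ ^ n := by
  unfold distTheta
  split_ifs with hxy
  · positivity
  · refine pow_le_pow_of_le_one h0.le h1.le (le_csInf ?_ fun m hm => ?_)
    · exact Function.ne_iff.mp hxy
    · by_contra hlt
      exact hm (h m (not_le.mp hlt))

/-- Lipschitz functions for `d_θ` are continuous for the product topology. -/
lemma continuous_of_lipschitz_distTheta {d : ℕ} {θ : ℝ} (h0 : 0 < θ) (h1 : θ < 1)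
    {g : (ℕ → Fin d) → ℝ} {C : ℝ} (hg : ∀ x y, |g x - g y| ≤ C * distTheta θ x y) :
    Continuous g := by
  rw [continuous_iff_continuousAt]
  intro x
  rw [ContinuousAt, Metric.tendsto_nhds]
  intro ε hε
  obtain ⟨n, hn⟩ := exists_pow_lt_of_lt_one (div_pos hε (by positivity : 0 < |C| + 1)) h1
  have hev : ∀ᶠ y in nhds x, ∀ i ∈ Finset.range n, y i = x i := by
    rw [Filter.eventually_all_finset]
    intro i _
    have := (continuous_apply i : Continuous fun y : ℕ → Fin d => y i).continuousAt (x := x)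
    exact this.eventually (p := fun b => b = x i) (by simp [nhds_discrete])
  filter_upwards [hev] with y hy
  have hd := distTheta_le_pow h0 h1 (x := y) (y := x) (n := n)
    fun i hi => hy i (Finset.mem_range.mpr hi)
  have hd0 := distTheta_nonneg h0 y x
  rw [lt_div_iff₀ (by positivity)] at hn
  rw [Real.dist_eq]
  calc |g y - g x| ≤ C * distTheta θ y x := hg y x
    _ ≤ (|C| + 1) * θ ^ n :=
      mul_le_mul (by linarith [le_abs_self C]) hd hd0 (by positivity)
    _ < ε := by linarith

/-- The twisted cohomological equation `α = φ + (w α) ∘ σ` has a continuous solution as soon as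
`w` and `φ` are continuous and `|w| ≤ ρ < 1`. -/
lemma exists_twisted_solution {d : ℕ} {w φ : (ℕ → Fin d) → ℝ} (hw : Continuous w)
    (hφ : Continuous φ) {ρ : ℝ} (hρ0 : 0 ≤ ρ) (hρ1 : ρ < 1) (hwρ : ∀ x, |w x| ≤ ρ) :
    ∃ α : (ℕ → Fin d) → ℝ, Continuous α ∧
      ∀ x, α x = φ x + w (shift x) * α (shift x) := by
  obtain ⟨K, hK⟩ := isCompact_univ.exists_bound_of_continuousOn hφ.continuousOn
  let t : ℕ → (ℕ → Fin d) → ℝ :=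
    fun n x => (∏ k ∈ Finset.range n, w (shift^[k + 1] x)) * φ (shift^[n] x)
  have ht_bound : ∀ n x, ‖t n x‖ ≤ ρ ^ n * K := by
    intro n x
    rw [norm_mul, norm_prod]
    refine mul_le_mul ?_ (hK _ trivial) (norm_nonneg _) (by positivity)
    calc ∏ k ∈ Finset.range n, ‖w (shift^[k + 1] x)‖
        ≤ ∏ _k ∈ Finset.range n, ρ :=
          Finset.prod_le_prod (fun _ _ => norm_nonneg _) fun _ _ => hwρ _
      _ = ρ ^ n := by simp
  have hsum : Summable fun n => ρ ^ n * K :=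
    (summable_geometric_of_lt_one hρ0 hρ1).mul_right K
  have ht_cont : ∀ n, Continuous (t n) := fun n =>
    (continuous_finsetProd _ fun k _ => hw.comp (continuous_shift.iterate (k + 1))).mul
      (hφ.comp (continuous_shift.iterate n))
  have ht_summable : ∀ x, Summable fun n => t n x := fun x =>
    Summable.of_norm_bounded hsum fun n => ht_bound n x
  have ht_succ : ∀ n x, t (n + 1) x = w (shift x) * t n (shift x) := by
    intro n x
    simp only [t, Finset.prod_range_succ', Function.iterate_succ_apply, Function.iterate_zero,
      id]
    ring
  refine ⟨fun x => ∑' n, t n x, continuous_tsum ht_cont hsum ht_bound, fun x => ?_⟩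
  simp only
  rw [(ht_summable x).tsum_eq_zero_add, ← tsum_mul_left]
  simp only [ht_succ]
  simp [t]

/-- **Eigenfunctions of `𝓛_A − I + V` via the twisted cohomological equation
(absence of spectral gap), on `X = {0,1}^ℕ`.** -/
theorem stmt_19 (θ : ℝ) (hθ0 : 0 < θ) (hθ1 : θ < 1)
    (A V : (ℕ → Fin 2) → ℝ)
    (CA : ℝ) (hALip : ∀ x y, |A x - A y| ≤ CA * distTheta θ x y)
    (hAnorm : ∀ x, ∑ a : Fin 2, Real.exp (A (cons a x)) = 1)
    (CV : ℝ) (hVLip : ∀ x y, |V x - V y| ≤ CV * distTheta θ x y)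
    (hosc : (⨆ x, V x) - (⨅ x, V x) < 2)
    (c : ℝ) (hc1 : max ((⨆ x, V x) - 2) 0 < c) (hc2 : c < ⨅ x, V x) :
    ∃ α : (ℕ → Fin 2) → ℝ, Measurable α ∧ (∃ M : ℝ, ∀ x, |α x| ≤ M) ∧
      (¬ ∀ x, α x = 0) ∧
      ∀ x, (∑ a : Fin 2, Real.exp (A (cons a x)) * α (cons a x)) - α x + V x * α x
        = c * α x := by
  have hA := continuous_of_lipschitz_distTheta hθ0 hθ1 hALip
  have hV := continuous_of_lipschitz_distTheta hθ0 hθ1 hVLip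
  have hsup : ∀ x, V x ≤ ⨆ x, V x := le_ciSup (isCompact_range hV).bddAbove
  have hinf : ∀ x, ⨅ x, V x ≤ V x := ciInf_le (isCompact_range hV).bddBelow
  have hc3 : (⨆ x, V x) - 2 < c := (le_max_left _ _).trans_lt hc1
  have hwρ : ∀ x, |1 + c - V x| ≤ max (1 + c - ⨅ x, V x) ((⨆ x, V x) - 1 - c) := by
    intro x
    refine abs_le'.mpr ⟨le_max_of_le_left ?_, le_max_of_le_right ?_⟩
    · linarith [hinf x]
    · linarith [hsup x]
  let φ : (ℕ → Fin 2) → ℝ := fun x => (if x 0 = 0 then 1 else -1) * Real.exp (-A x)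
  have hφ : Continuous φ := by
    have h : Continuous fun a : Fin 2 => (if a = 0 then 1 else -1 : ℝ) :=
      continuous_of_discreteTopology
    exact (h.comp (continuous_apply 0)).mul (Real.continuous_exp.comp hA.neg)
  obtain ⟨α, hα, hα_eq⟩ := exists_twisted_solution (w := fun x => 1 + c - V x) (φ := φ)
    (continuous_const.sub hV) hφ ((abs_nonneg _).trans (hwρ fun _ => 0))
    (max_lt (by linarith) (by linarith)) hwρ
  obtain ⟨M, hM⟩ := isCompact_univ.exists_bound_of_continuousOn hα.continuousOn
  refine ⟨α, hα.measurable, ⟨M, fun x => hM x trivial⟩, fun h => ?_, fun x => ?_⟩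
  · have := hα_eq fun _ => 0
    simp [h, φ] at this
    exact (Real.exp_pos _).ne this
  · have hn := hAnorm x
    rw [Fin.sum_univ_two] at hn ⊢
    have e0 := hα_eq (cons 0 x)
    have e1 := hα_eq (cons 1 x)
    have p0 : Real.exp (A (cons 0 x)) * φ (cons 0 x) = 1 := by
      simp [φ, cons, ← Real.exp_add]
    have p1 : Real.exp (A (cons 1 x)) * φ (cons 1 x) = -1 := by
      simp [φ, cons, ← Real.exp_add]
    rw [shift_cons_eq] at e0 e1
    rw [e0, e1]
    linear_combination p0 + p1 + (1 + c - V x) * α x * hn
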